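/- Let G be a finitely generated virtually abelian group, let S be a finite set generating G as a monoid with weight function ω : S → ℕ₊, and let H₁, …, H_k be finitely many subgroups of G. Then the weighted growth series of the union H₁ ∪ ⋯ ∪ H_k relative to G, namely ∑_{n≥0} #{g ∈ H₁ ∪ ⋯ ∪ H_k : ω(g) = n} zⁿ, is a rational power series. -/

import Mathlib

/-- The weight of a group element `g` with respect to a generating set `S` and a
weight function `ω`: the minimal total weight among all words over `S` representing `g`. -/
noncomputable def wordWeight {G : Type*} [Group G] (S : Set G) (ω : G → ℕ) (g : G) : ℕ :=
  sInf {n | ∃ l : List G, (∀ x ∈ l, x ∈ S) ∧ l.prod = g ∧ (l.map ω).sum = n}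

/-- A formal power series with integer coefficients is rational if it is the quotient
of two integer polynomials. -/
def IsRationalSeries (f : PowerSeries ℤ) : Prop :=
  ∃ p q : Polynomial ℤ, q ≠ 0 ∧ f * (q : PowerSeries ℤ) = (p : PowerSeries ℤ)

/-!
Fix an abelian subgroup `N` of finite index. Reading words along coset representatives and recording
the resulting element of `N` together with the weight of the word, Kleene's algorithm shows that the
set of all such pairs is semilinear in each coset `N * t`. Removing from it the pairs lying strictly
above another pair with the same first coordinate keeps it semilinear and leaves the graph of the
minimal weight. A subgroup meets each coset of `N` in a semilinear set, so it remains to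
see that a semilinear set with finitely many elements of each weight has rational growth. By
inclusion-exclusion this reduces to finitely many translates of one finitely generated
submonoid, where adding a generator `x` turns `B` into a set `A` with `A = B ∪ (x + A)`, so that
the growth series of `A` is that of `B \ (x + A)` divided by `1 - X ^ w x`.
-/

namespace IsRationalSeries

variable {f g : PowerSeries ℤ}

theorem coe (p : Polynomial ℤ) : IsRationalSeries (p : PowerSeries ℤ) :=
  ⟨p, 1, one_ne_zero, by simp⟩

theorem add (hf : IsRationalSeries f) (hg : IsRationalSeries g) : IsRationalSeries (f + g) := by
  obtain ⟨p, q, hq, h⟩ := hf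
  obtain ⟨p', q', hq', h'⟩ := hg
  refine ⟨p * q' + p' * q, q * q', mul_ne_zero hq hq', ?_⟩
  push_cast
  linear_combination (q' : PowerSeries ℤ) * h + (q : PowerSeries ℤ) * h'

theorem sub (hf : IsRationalSeries f) (hg : IsRationalSeries g) : IsRationalSeries (f - g) := by
  obtain ⟨p, q, hq, h⟩ := hf
  obtain ⟨p', q', hq', h'⟩ := hg
  refine ⟨p * q' - p' * q, q * q', mul_ne_zero hq hq', ?_⟩
  push_cast
  linear_combination (q' : PowerSeries ℤ) * h - (q : PowerSeries ℤ) * h'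

theorem of_eq_add_X_pow_mul_self (hg : IsRationalSeries g) {c : ℕ} (hc : c ≠ 0)
    (h : f = g + PowerSeries.X ^ c * f) : IsRationalSeries f := by
  obtain ⟨p, q, hq, hpq⟩ := hg
  have hX : (1 - Polynomial.X ^ c : Polynomial ℤ) ≠ 0 :=
    sub_ne_zero.2 fun h1 => by simpa [hc] using congrArg (Polynomial.eval 0) h1
  refine ⟨p, (1 - Polynomial.X ^ c) * q, mul_ne_zero hX hq, ?_⟩
  push_cast
  linear_combination (q : PowerSeries ℤ) * h + hpq

end IsRationalSeries

section Growth

open Set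

variable {α β ι : Type*} {w : α → ℕ} {s t : Set α}

/-- The generating function counting the elements of `s` by their weight `w`. A coefficient is the
junk value `0` when infinitely many elements of `s` have that weight. -/
noncomputable def growthSeries (w : α → ℕ) (s : Set α) : PowerSeries ℤ :=
  PowerSeries.mk fun m => ((s ∩ w ⁻¹' {m}).ncard : ℤ)

/-- The property that `s` has finitely many elements of each weight, counted by a rational
series. -/
structure HasRationalGrowth (w : α → ℕ) (s : Set α) : Prop where
  finite_fiber (m : ℕ) : (s ∩ w ⁻¹' {m}).Finite
  isRationalSeries : IsRationalSeries (growthSeries w s)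

theorem growthSeries_union_add_inter (hs : ∀ m, (s ∩ w ⁻¹' {m}).Finite)
    (ht : ∀ m, (t ∩ w ⁻¹' {m}).Finite) :
    growthSeries w (s ∪ t) + growthSeries w (s ∩ t) = growthSeries w s + growthSeries w t := by
  ext m
  have key := ncard_union_add_ncard_inter (s ∩ w ⁻¹' {m}) (t ∩ w ⁻¹' {m}) (hs m) (ht m)
  rw [← union_inter_distrib_right, ← inter_inter_distrib_right] at key
  simpa [growthSeries] using mod_cast key

theorem growthSeries_sdiff_add_inter (hs : ∀ m, (s ∩ w ⁻¹' {m}).Finite) :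
    growthSeries w (s \ t) + growthSeries w (s ∩ t) = growthSeries w s := by
  ext m
  have key := ncard_inter_add_ncard_sdiff_eq_ncard (s ∩ w ⁻¹' {m}) t (hs m)
  rw [inter_right_comm, inter_sdiff_right_comm, add_comm] at key
  simpa [growthSeries] using mod_cast key

theorem image_inter_fiber {g : α → β} {v : β → ℕ} {c : ℕ} (hv : ∀ x ∈ s, v (g x) = w x + c)
    (m : ℕ) : (g '' s) ∩ v ⁻¹' {m + c} = g '' (s ∩ w ⁻¹' {m}) := by
  ext y
  constructor
  · rintro ⟨⟨x, hx, rfl⟩, hm⟩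
    exact ⟨x, ⟨hx, add_right_cancel ((hv x hx).symm.trans hm)⟩, rfl⟩
  · rintro ⟨x, ⟨hx, rfl⟩, rfl⟩
    exact ⟨⟨x, hx, rfl⟩, hv x hx⟩

theorem image_inter_fiber_of_lt {g : α → β} {v : β → ℕ} {c m : ℕ}
    (hv : ∀ x ∈ s, v (g x) = w x + c) (hm : m < c) : (g '' s) ∩ v ⁻¹' {m} = ∅ := by
  refine subset_empty_iff.1 ?_
  rintro _ ⟨⟨x, hx, rfl⟩, rfl⟩
  exact absurd (hv x hx) (by omega)

theorem growthSeries_image {g : α → β} {v : β → ℕ} {c : ℕ} (hg : InjOn g s)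
    (hv : ∀ x ∈ s, v (g x) = w x + c) :
    growthSeries v (g '' s) = PowerSeries.X ^ c * growthSeries w s := by
  ext m
  rw [PowerSeries.coeff_X_pow_mul']
  split_ifs with hcm
  · obtain ⟨m, rfl⟩ := Nat.exists_eq_add_of_le' hcm
    simp only [growthSeries, PowerSeries.coeff_mk, image_inter_fiber hv, Nat.add_sub_cancel,
      (hg.mono inter_subset_left).ncard_image]
  · simp [growthSeries, image_inter_fiber_of_lt hv (not_le.1 hcm)]

namespace HasRationalGrowth

theorem of_finite (hs : s.Finite) : HasRationalGrowth w s := by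
  refine ⟨fun m => hs.inter_of_left _, ?_⟩
  obtain ⟨b, hb⟩ := (hs.image w).bddAbove
  have : growthSeries w s = (PowerSeries.trunc (b + 1) (growthSeries w s) : PowerSeries ℤ) := by
    ext m
    rw [Polynomial.coeff_coe, PowerSeries.coeff_trunc]
    split_ifs with hm
    · rfl
    · have hempty : s ∩ w ⁻¹' {m} = ∅ := by
        refine subset_empty_iff.1 ?_
        rintro x ⟨hx, rfl⟩
        exact hm (Nat.lt_succ_of_le (hb ⟨x, hx, rfl⟩))
      simp [growthSeries, hempty]
  exact this ▸ .coe _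

theorem union (hs : HasRationalGrowth w s) (ht : HasRationalGrowth w t)
    (hst : HasRationalGrowth w (s ∩ t)) : HasRationalGrowth w (s ∪ t) where
  finite_fiber m := by
    rw [union_inter_distrib_right]
    exact (hs.finite_fiber m).union (ht.finite_fiber m)
  isRationalSeries := by
    rw [eq_sub_of_add_eq (growthSeries_union_add_inter hs.finite_fiber ht.finite_fiber)]
    exact (hs.isRationalSeries.add ht.isRationalSeries).sub hst.isRationalSeries

theorem sdiff (hs : HasRationalGrowth w s) (hst : HasRationalGrowth w (s ∩ t)) :
    HasRationalGrowth w (s \ t) where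
  finite_fiber m := (hs.finite_fiber m).subset (inter_subset_inter_left _ sdiff_subset)
  isRationalSeries := by
    rw [eq_sub_of_add_eq (growthSeries_sdiff_add_inter hs.finite_fiber)]
    exact hs.isRationalSeries.sub hst.isRationalSeries

theorem image (hs : HasRationalGrowth w s) {g : α → β} {v : β → ℕ} (hg : InjOn g s)
    (hv : ∀ x ∈ s, v (g x) = w x) : HasRationalGrowth v (g '' s) where
  finite_fiber m := by
    rw [← add_zero m, image_inter_fiber (by simpa using hv)]
    exact (hs.finite_fiber m).image g
  isRationalSeries := by
    rw [growthSeries_image (c := 0) hg (by simpa using hv), pow_zero, one_mul]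
    exact hs.isRationalSeries

theorem of_eq_union_image {g : α → α} {c : ℕ} (hc : c ≠ 0) (hg : InjOn g s)
    (hw : ∀ x ∈ s, w (g x) = w x + c) (hst : s = t ∪ g '' s)
    (h : HasRationalGrowth w (t \ g '' s)) : HasRationalGrowth w s := by
  have hunion : t \ g '' s ∪ g '' s = s := by rw [sdiff_union_self, ← hst]
  have hsdiff : s \ g '' s = t \ g '' s := by
    generalize g '' s = u at hst
    rw [hst, union_sdiff_right]
  have hfin (m : ℕ) : (s ∩ w ⁻¹' {m}).Finite := by
    induction m using Nat.strong_induction_on with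
    | _ m ih =>
      have himage : ((g '' s) ∩ w ⁻¹' {m}).Finite := by
        rcases lt_or_ge m c with hm | hm
        · simp [image_inter_fiber_of_lt hw hm]
        · rw [← Nat.sub_add_cancel hm, image_inter_fiber hw]
          exact (ih (m - c) (by omega)).image g
      rw [← hunion, union_inter_distrib_right]
      exact (h.finite_fiber m).union himage
  refine ⟨hfin, h.isRationalSeries.of_eq_add_X_pow_mul_self hc ?_⟩
  rw [← growthSeries_image hg hw, ← hsdiff,
    ← growthSeries_sdiff_add_inter (t := g '' s) hfin,
    inter_eq_right.2 (subset_union_right.trans hst.superset)]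

theorem biUnion {𝒞 : Set (Set α)} (hinter : ∀ A ∈ 𝒞, ∀ B ∈ 𝒞, A ∩ B ∈ 𝒞)
    (h𝒞 : ∀ A ∈ 𝒞, HasRationalGrowth w A) {I : Set ι} (hI : I.Finite) {f : ι → Set α}
    (hf : ∀ i ∈ I, f i ∈ 𝒞) : HasRationalGrowth w (⋃ i ∈ I, f i) := by
  induction I, hI using Set.Finite.induction_on generalizing f with
  | empty => simpa using of_finite Set.finite_empty
  | @insert a I _ _ ih =>
    have ha := hf a (mem_insert a I)
    have hfI i (hi : i ∈ I) := hf i (mem_insert_of_mem a hi)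
    rw [biUnion_insert]
    refine (h𝒞 _ ha).union (ih hfI) ?_
    rw [inter_iUnion₂]
    exact ih fun i hi => hinter _ ha _ (hfI i hi)

theorem biUnion_of_pairwiseDisjoint {I : Set ι} (hI : I.Finite) {f : ι → Set α}
    (hdisj : I.PairwiseDisjoint f) (hf : ∀ i ∈ I, HasRationalGrowth w (f i)) :
    HasRationalGrowth w (⋃ i ∈ I, f i) := by
  refine biUnion (𝒞 := insert ∅ (f '' I)) ?_ ?_ hI fun i hi => Or.inr ⟨i, hi, rfl⟩
  · rintro A (rfl | ⟨i, hi, rfl⟩) B hB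
    · exact Or.inl (empty_inter B)
    · obtain rfl | ⟨j, hj, rfl⟩ := hB
      · exact Or.inl (inter_empty _)
      · by_cases hij : i = j
        · exact Or.inr ⟨i, hi, by rw [hij, inter_self]⟩
        · exact Or.inl (hdisj hi hj hij).inter_eq
  · rintro A (rfl | ⟨i, hi, rfl⟩)
    · exact of_finite Set.finite_empty
    · exact hf i hi

end HasRationalGrowth

end Growth

section Semilinear

open Set
open scoped Pointwise

theorem isSemilinearSet_addSubgroup {M : Type*} [AddCommGroup M] [AddGroup.FG M]
    (K : AddSubgroup M) : IsSemilinearSet (K : Set M) := by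
  have : Module.Finite ℤ M := Module.Finite.iff_addGroup_fg.2 inferInstance
  have hK : (AddSubgroup.toIntSubmodule K).FG := IsNoetherian.noetherian _
  rw [Submodule.fg_iff_addSubgroup_fg, AddSubgroup.toIntSubmodule_toAddSubgroup,
    AddSubgroup.fg_iff_addSubmonoid_fg] at hK
  exact .of_fg hK

theorem isSemilinearSet_setOf_isLeast {M : Type*} [AddCancelCommMonoid M] {R : Set (M × ℕ)}
    (hR : IsSemilinearSet R) : IsSemilinearSet {x : M × ℕ | IsLeast {m | (x.1, m) ∈ R} x.2} := by
  have hpos : IsSemilinearSet (AddMonoidHom.inr M ℕ '' ((1 : ℕ) +ᵥ univ)) :=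
    (IsSemilinearSet.univ.vadd 1).image _
  convert hR.sdiff (hR.add hpos) using 1
  ext ⟨a, m⟩
  constructor
  · rintro ⟨hm, hle⟩
    refine ⟨hm, ?_⟩
    rintro ⟨⟨b, i⟩, hi, _, ⟨_, ⟨j, -, rfl⟩, rfl⟩, hij⟩
    obtain ⟨rfl, rfl⟩ : b = a ∧ i + (1 + j) = m := by simpa using hij
    have : i + (1 + j) ≤ i := hle hi
    omega
  · rintro ⟨hm, hlt⟩
    refine ⟨hm, fun i hi => not_lt.1 fun him => hlt ?_⟩
    refine ⟨(a, i), hi, (0, m - i), ⟨m - i, ⟨m - i - 1, mem_univ _, ?_⟩, rfl⟩, ?_⟩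
    · simp only [vadd_eq_add]
      omega
    · simp [him.le]

end Semilinear

section HybridLinear

open Set AddSubmonoid
open scoped Pointwise

theorem exists_finite_subset_forall_exists_le {α : Type*} [PartialOrder α] [WellQuasiOrderedLE α]
    (U : Set α) : ∃ V ⊆ U, V.Finite ∧ ∀ u ∈ U, ∃ v ∈ V, v ≤ u :=
  ⟨{v | Minimal (· ∈ U) v}, fun _ hv => hv.prop,
    WellQuasiOrderedLE.finite_of_isAntichain (setOfPred_minimal_antichain _), fun u hu =>
    let ⟨v, hvu, hv⟩ := exists_minimal_le_of_wellFoundedLT (· ∈ U) u hu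
    ⟨v, hv, hvu⟩⟩

variable {M : Type*}

/-- A hybrid linear set: finitely many translates of one finitely generated submonoid. Unlike
linear sets, these are closed under intersection, and unlike semilinear sets, their growth is
accessible to a recursion on the generators of the submonoid. -/
def IsHybridLinearSet [AddCommMonoid M] (A : Set M) : Prop :=
  ∃ (F : Set M) (P : AddSubmonoid M), F.Finite ∧ P.FG ∧ A = F + (P : Set M)

theorem add_add_subset_of_le [AddCommMonoid M] {P Q : AddSubmonoid M} (hQP : Q ≤ P) (F : Set M) :
    F + (P : Set M) + (Q : Set M) ⊆ F + (P : Set M) := by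
  rw [add_assoc]
  refine add_subset_add_left ?_
  rintro _ ⟨p, hp, q, hq, rfl⟩
  exact add_mem hp (hQP hq)

theorem exists_finite_eq_add_of_subset_add [AddCommMonoid M] {P : AddSubmonoid M} (hP : P.FG)
    {F A : Set M} (hF : F.Finite) (hAF : A ⊆ F + (P : Set M)) (hA : A + (P : Set M) ⊆ A) :
    ∃ F' : Set M, F'.Finite ∧ A = F' + (P : Set M) := by
  obtain ⟨k, φ, rfl⟩ := fg_iff_exists_fin_addMonoidHom.1 hP
  -- Dickson's lemma for `ℕ ^ k`, applied separately in each translate.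
  choose V hVA hV hle using fun a =>
    exists_finite_subset_forall_exists_le {u : Fin k → ℕ | a + φ u ∈ A}
  refine ⟨⋃ a ∈ F, (fun u => a + φ u) '' V a, hF.biUnion fun a _ => (hV a).image _,
    Subset.antisymm ?_ ?_⟩
  · intro x hx
    obtain ⟨a, ha, _, ⟨u, rfl⟩, rfl⟩ := hAF hx
    obtain ⟨v, hv, hvu⟩ := hle a u hx
    obtain ⟨d, rfl⟩ := exists_add_of_le hvu
    exact ⟨a + φ v, mem_biUnion ha ⟨v, hv, rfl⟩, φ d, ⟨d, rfl⟩,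
      by simp only [map_add, add_assoc]⟩
  · refine (add_subset_add_right (iUnion₂_subset fun a _ => ?_)).trans hA
    exact image_subset_iff.2 (hVA a)

theorem add_closure_insert [AddCommMonoid M] (F T : Set M) (x : M) :
    F + (closure (insert x T) : Set M) =
      (F + (closure T : Set M)) ∪ (x + ·) '' (F + (closure (insert x T) : Set M)) := by
  refine Subset.antisymm ?_ (union_subset (add_subset_add_left (closure_mono (subset_insert x T)))
    ?_)
  · rintro _ ⟨a, ha, p, hp, rfl⟩
    obtain ⟨_, hn, q, hq, rfl⟩ := mem_sup.1 ((AddSubmonoid.closure_union {x} T).le hp)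
    obtain ⟨n, rfl⟩ := mem_closure_singleton.1 hn
    cases n with
    | zero => exact Or.inl ⟨a, ha, q, hq, by simp⟩
    | succ n =>
      have hmem : n • x + q ∈ closure (insert x T) :=
        add_mem (nsmul_mem (mem_closure_of_mem (mem_insert x T)) n)
          (closure_mono (subset_insert x T) hq)
      exact Or.inr ⟨_, ⟨a, ha, _, hmem, rfl⟩, by simp only [succ_nsmul]; abel⟩
  · rintro _ ⟨_, ⟨a, ha, p, hp, rfl⟩, rfl⟩
    exact ⟨a, ha, x + p, add_mem (mem_closure_of_mem (mem_insert x T)) hp, add_left_comm _ _ _⟩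

theorem hasRationalGrowth_add_closure [AddCancelCommMonoid M] (w : M →+ ℕ) {F T : Set M}
    (hF : F.Finite) (hT : T.Finite) (hw : ∀ x ∈ T, w x ≠ 0) :
    HasRationalGrowth w (F + (closure T : Set M)) := by
  induction T, hT using Set.Finite.induction_on generalizing F with
  | empty => simpa using .of_finite hF
  | @insert x T _ hT ih =>
    have ihT {F : Set M} (hF : F.Finite) : HasRationalGrowth w (F + (closure T : Set M)) :=
      ih hF fun y hy => hw y (mem_insert_of_mem x hy)
    -- The overlap of `B` with the translate of `A` by `x` is stable under `closure T`, hence again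
    -- a finite union of translates of `closure T`, to which the induction hypothesis applies.
    set A := F + (closure (insert x T) : Set M)
    set B := F + (closure T : Set M)
    have hAT : A + (closure T : Set M) ⊆ A :=
      add_add_subset_of_le (AddSubmonoid.closure_mono (subset_insert x T)) F
    have hBT : B + (closure T : Set M) ⊆ B := add_add_subset_of_le le_rfl F
    have hxAT : (x + ·) '' A + (closure T : Set M) ⊆ (x + ·) '' A := by
      rw [← singleton_add, add_assoc]
      exact add_subset_add_left hAT
    obtain ⟨F', hF', hinter⟩ := exists_finite_eq_add_of_subset_add (A := B ∩ (x + ·) '' A)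
      ⟨hT.toFinset, by simp⟩ hF inter_subset_left
      (inter_add_subset.trans (inter_subset_inter hBT hxAT))
    exact .of_eq_union_image (hw x (mem_insert x T)) (add_right_injective x).injOn
      (fun y _ => by rw [map_add, add_comm]) (add_closure_insert F T x)
      ((ihT hF).sdiff (hinter ▸ ihT hF'))

theorem inf_fg_of_fg [AddCancelCommMonoid M] {P P' : AddSubmonoid M} (hP : P.FG) (hP' : P'.FG) :
    (P ⊓ P').FG := by
  obtain ⟨k, φ, rfl⟩ := fg_iff_exists_fin_addMonoidHom.1 hP
  obtain ⟨l, ψ, rfl⟩ := fg_iff_exists_fin_addMonoidHom.1 hP'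
  set φ' := φ.comp (AddMonoidHom.fst (Fin k → ℕ) (Fin l → ℕ))
  set ψ' := ψ.comp (AddMonoidHom.snd (Fin k → ℕ) (Fin l → ℕ))
  have hmap : AddMonoidHom.mrange φ ⊓ AddMonoidHom.mrange ψ = (φ'.eqLocusM ψ').map φ' := by
    ext x
    constructor
    · rintro ⟨⟨u, rfl⟩, ⟨v, hv⟩⟩
      exact ⟨(u, v), hv.symm, rfl⟩
    · rintro ⟨⟨u, v⟩, huv, rfl⟩
      exact ⟨⟨u, rfl⟩, ⟨v, huv.symm⟩⟩
  exact hmap ▸ (fg_eqLocusM φ' ψ').map φ'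

theorem exists_finite_inter_subset_add_inf [AddCancelCommMonoid M] {P P' : AddSubmonoid M}
    (hP : P.FG) (hP' : P'.FG) (a b : M) : ∃ F : Set M, F.Finite ∧
      (a +ᵥ (P : Set M)) ∩ (b +ᵥ (P' : Set M)) ⊆ F + ((P ⊓ P' : AddSubmonoid M) : Set M) := by
  obtain ⟨k, φ, rfl⟩ := fg_iff_exists_fin_addMonoidHom.1 hP
  obtain ⟨l, ψ, rfl⟩ := fg_iff_exists_fin_addMonoidHom.1 hP'
  obtain ⟨V, hV, hVfin, hle⟩ := exists_finite_subset_forall_exists_le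
    {x : (Fin k → ℕ) × (Fin l → ℕ) | a + φ x.1 = b + ψ x.2}
  refine ⟨(fun x => a + φ x.1) '' V, hVfin.image _, ?_⟩
  rintro _ ⟨⟨_, ⟨u, rfl⟩, rfl⟩, ⟨_, ⟨v, rfl⟩, huv⟩⟩
  obtain ⟨⟨u₀, v₀⟩, hV₀, hu, hv⟩ := hle (u, v) huv.symm
  have huv₀ : a + φ u₀ = b + ψ v₀ := hV hV₀
  obtain ⟨d, rfl⟩ := exists_add_of_le hu
  obtain ⟨e, rfl⟩ := exists_add_of_le hv
  have hde : φ d = ψ e := by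
    simp only [vadd_eq_add, map_add, ← add_assoc, huv₀] at huv
    exact (add_left_cancel huv).symm
  exact ⟨_, ⟨_, hV₀, rfl⟩, φ d, ⟨⟨d, rfl⟩, ⟨e, hde.symm⟩⟩, by simp [add_assoc]⟩

namespace IsHybridLinearSet

theorem of_isLinearSet [AddCommMonoid M] {A : Set M} (hA : IsLinearSet A) :
    IsHybridLinearSet A := by
  obtain ⟨a, P, hP, rfl⟩ := isLinearSet_iff_exists_fg_eq_vadd.1 hA
  exact ⟨{a}, P, finite_singleton a, hP, by rw [singleton_add]; rfl⟩

variable [AddCancelCommMonoid M] {A B : Set M}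

theorem inter (hA : IsHybridLinearSet A) (hB : IsHybridLinearSet B) :
    IsHybridLinearSet (A ∩ B) := by
  obtain ⟨F, P, hF, hP, rfl⟩ := hA
  obtain ⟨F', P', hF', hP', rfl⟩ := hB
  choose E hE hsub using exists_finite_inter_subset_add_inf hP hP'
  have hcover : (F + (P : Set M)) ∩ (F' + (P' : Set M)) ⊆
      (⋃ a ∈ F, ⋃ b ∈ F', E a b) + ((P ⊓ P' : AddSubmonoid M) : Set M) := by
    rintro _ ⟨⟨a, ha, p, hp, rfl⟩, ⟨b, hb, q, hq, hpq⟩⟩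
    exact add_subset_add_right (subset_biUnion_of_mem ha |>.trans' (subset_biUnion_of_mem hb))
      (hsub a b ⟨⟨p, hp, rfl⟩, ⟨q, hq, hpq⟩⟩)
  have hstable : (F + (P : Set M)) ∩ (F' + (P' : Set M)) + ((P ⊓ P' : AddSubmonoid M) : Set M) ⊆
      (F + (P : Set M)) ∩ (F' + (P' : Set M)) :=
    inter_add_subset.trans (inter_subset_inter (add_add_subset_of_le inf_le_left F)
      (add_add_subset_of_le inf_le_right F'))
  have hfg := inf_fg_of_fg hP hP'
  obtain ⟨D, hD, h⟩ := exists_finite_eq_add_of_subset_add hfg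
    (hF.biUnion fun a _ => hF'.biUnion fun b _ => hE a b) hcover hstable
  exact ⟨D, _, hD, hfg, h⟩

theorem hasRationalGrowth {w : M →+ ℕ} (hA : IsHybridLinearSet A)
    (hfin : ∀ m, (A ∩ w ⁻¹' {m}).Finite) : HasRationalGrowth w A := by
  obtain ⟨F, P, hF, hP, rfl⟩ := hA
  obtain ⟨T, rfl, hT⟩ := (fg_iff _).1 hP
  -- Finiteness of the fibers leaves only finitely many sums of generators of weight zero.
  set T₀ := {x ∈ T | w x = 0}
  set T₁ := {x ∈ T | w x ≠ 0}
  have hT₀ : ∀ p ∈ closure T₀, w p = 0 :=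
    (closure_le (S := AddMonoidHom.mker w)).2 fun x hx => hx.2
  have hF₀ : (F + (closure T₀ : Set M)).Finite := by
    refine (hF.biUnion fun a _ => hfin (w a)).subset ?_
    rintro _ ⟨a, ha, p, hp, rfl⟩
    exact mem_biUnion ha ⟨⟨a, ha, p, closure_mono (sep_subset T _) hp, rfl⟩, by simp [hT₀ p hp]⟩
  have hsplit : F + (closure T : Set M) = F + (closure T₀ : Set M) + (closure T₁ : Set M) := by
    rw [add_assoc, ← coe_sup, ← AddSubmonoid.closure_union, ← sep_or]
    simp [em]
  exact hsplit ▸ hasRationalGrowth_add_closure w hF₀ (hT.sep _) fun x hx => hx.2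

end IsHybridLinearSet

theorem hasRationalGrowth_of_isSemilinearSet [AddCancelCommMonoid M] {w : M →+ ℕ} {A : Set M}
    (hA : IsSemilinearSet A) (hfin : ∀ m, (A ∩ w ⁻¹' {m}).Finite) : HasRationalGrowth w A := by
  obtain ⟨C, hC, hlin, rfl⟩ := hA
  rw [sUnion_eq_biUnion]
  refine .biUnion (𝒞 := {B | IsHybridLinearSet B ∧ ∀ m, (B ∩ w ⁻¹' {m}).Finite})
    (fun B hB B' hB' => ⟨hB.1.inter hB'.1, fun m => (hB.2 m).subset ?_⟩)
    (fun B hB => hB.1.hasRationalGrowth hB.2) hC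
    fun B hB => ⟨.of_isLinearSet (hlin B hB), fun m => (hfin m).subset ?_⟩
  · exact inter_subset_inter_left _ inter_subset_left
  · exact inter_subset_inter_left _ (subset_sUnion_of_mem hB)

end HybridLinear

section Paths

open Set AddSubmonoid
open scoped Pointwise

variable {Q M : Type*} [AddCommMonoid M] {E : Q → Q → Set M} {T T' : Set Q} {p q r : Q} {x y : M}

/-- `PathLabel E T p q x` states that `x` is the total label of a nonempty path from `p` to `q`
with all intermediate vertices in `T`, where `E p q` is the set of labels of the edges from `p` to
`q`. -/
inductive PathLabel (E : Q → Q → Set M) (T : Set Q) : Q → Q → M → Prop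
  | single {p q : Q} {x : M} (hx : x ∈ E p q) : PathLabel E T p q x
  | cons {p r q : Q} {x y : M} (hx : x ∈ E p r) (hr : r ∈ T) (hy : PathLabel E T r q y) :
      PathLabel E T p q (x + y)

namespace PathLabel

theorem mono (hT : T ⊆ T') (hx : PathLabel E T p q x) : PathLabel E T' p q x := by
  induction hx with
  | single hx => exact .single hx
  | cons hx hr _ ih => exact .cons hx (hT hr) ih

theorem trans (hx : PathLabel E T p r x) (hr : r ∈ T) (hy : PathLabel E T r q y) :
    PathLabel E T p q (x + y) := by
  induction hx with
  | single hx => exact .cons hx hr hy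
  | cons hx hs _ ih => exact add_assoc _ _ y ▸ .cons hx hs (ih hr hy)

theorem closure_add (hx : x ∈ closure {z | PathLabel E T r r z}) (hr : r ∈ T)
    (hy : PathLabel E T r q y) : PathLabel E T r q (x + y) := by
  induction hx using AddSubmonoid.closure_induction generalizing y with
  | mem x hx => exact hx.trans hr hy
  | zero => rwa [zero_add]
  | add u v _ _ hu hv => exact add_assoc u v y ▸ hu (hv hy)

theorem mem_of_insert (hx : PathLabel E (insert r T) p q x) :
    x ∈ {z | PathLabel E T p q z} ∪ ({z | PathLabel E T p r z} +
      ((closure {z | PathLabel E T r r z} : Set M) + {z | PathLabel E T r q z})) := by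
  induction hx with
  | single hx => exact Or.inl (.single hx)
  | cons hx hs _ ih =>
    rcases hs with rfl | hs
    · rcases ih with hy | ⟨a, ha, _, ⟨b, hb, c, hc, rfl⟩, rfl⟩
      · exact Or.inr ⟨_, .single hx, _, ⟨0, zero_mem _, _, hy, zero_add _⟩, rfl⟩
      · exact Or.inr ⟨_, .single hx, _,
          ⟨a + b, add_mem (mem_closure_of_mem ha) hb, c, hc, add_assoc a b c⟩, rfl⟩
    · rcases ih with hy | ⟨a, ha, b, hb, rfl⟩
      · exact Or.inl (.cons hx hs hy)
      · exact Or.inr ⟨_, .cons hx hs ha, b, hb, add_assoc _ a b⟩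

theorem setOf_insert (E : Q → Q → Set M) (T : Set Q) (p q r : Q) :
    {x | PathLabel E (insert r T) p q x} =
      {x | PathLabel E T p q x} ∪ ({x | PathLabel E T p r x} +
        ((closure {x | PathLabel E T r r x} : Set M) + {x | PathLabel E T r q x})) := by
  refine Subset.antisymm (fun x => mem_of_insert) (union_subset (fun x => mono (subset_insert r T))
    ?_)
  rintro _ ⟨a, ha, _, ⟨b, hb, c, hc, rfl⟩, rfl⟩
  have hr : r ∈ insert r T := mem_insert r T
  have hT : T ⊆ insert r T := subset_insert r T
  exact (ha.mono hT).trans hr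
    (closure_add (AddSubmonoid.closure_mono (fun z => mono hT) hb) hr (hc.mono hT))

theorem isSemilinearSet (hE : ∀ p q, IsSemilinearSet (E p q)) (hT : T.Finite) (p q : Q) :
    IsSemilinearSet {x | PathLabel E T p q x} := by
  induction T, hT using Set.Finite.induction_on generalizing p q with
  | empty =>
    convert hE p q using 1
    refine Subset.antisymm (fun x hx => ?_) fun x => .single
    cases hx with
    | single hx => exact hx
    | cons _ hr _ => exact hr.elim
  | @insert r T _ _ ih =>
    rw [setOf_insert]
    exact (ih p q).union ((ih p r).add ((ih r r).closure.add (ih r q)))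

end PathLabel

end Paths

section Words

open Set
open scoped Pointwise IsMulCommutative

variable {G : Type*} [Group G] {N : Subgroup G} {S : Set G} {ω : G → ℕ}

/-- The pairs `(a, m)` such that some word of weight `m` in the language `L` leads from `g` to
the element `a * h` of the coset `N * h`. -/
def cosetLabels (N : Subgroup G) (ω : G → ℕ) (L : Set (List G)) (g h : G) : Set (Additive N × ℕ) :=
  {x | ∃ l ∈ L, g * l.prod = (x.1.toMul : G) * h ∧ (l.map ω).sum = x.2}

theorem cosetLabels_finite {L : Set (List G)} (hL : L.Finite) (g h : G) :
    (cosetLabels N ω L g h).Finite := by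
  have hsub (l : List G) : {x : Additive N × ℕ |
      g * l.prod = (x.1.toMul : G) * h ∧ (l.map ω).sum = x.2}.Subsingleton := by
    rintro ⟨a, m⟩ ⟨ha, rfl⟩ ⟨b, m'⟩ ⟨hb, rfl⟩
    exact Prod.ext (Subtype.ext (mul_right_cancel (ha.symm.trans hb))) rfl
  refine (hL.biUnion fun l _ => (hsub l).finite).subset ?_
  rintro x ⟨l, hl, hx⟩
  exact mem_biUnion hl hx

theorem add_mem_cosetLabels {L : Set (List G)} (hL : ∀ l ∈ L, ∀ l' ∈ L, l ++ l' ∈ L) {f g h : G}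
    {x y : Additive N × ℕ} (hx : x ∈ cosetLabels N ω L f g) (hy : y ∈ cosetLabels N ω L g h) :
    x + y ∈ cosetLabels N ω L f h := by
  obtain ⟨l, hl, hx, hlx⟩ := hx
  obtain ⟨l', hl', hy, hly⟩ := hy
  refine ⟨l ++ l', hL l hl l' hl', ?_, by simp [hlx, hly]⟩
  calc f * (l ++ l').prod = f * l.prod * l'.prod := by rw [List.prod_append, mul_assoc]
    _ = x.1.toMul * (g * l'.prod) := by rw [hx, mul_assoc]
    _ = (x + y).1.toMul * h := by rw [hy, ← mul_assoc]; rfl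

variable [IsMulCommutative N]

-- A path follows a word through the cosets represented by `T`; the empty label is needed for the
-- last edge, which ends at `h` rather than at the representative of its coset.
theorem cosetLabels_words_subset_setOf_pathLabel (ω : G → ℕ) {T : Set G}
    (hT : ∀ g, ∃ t ∈ T, g * t⁻¹ ∈ N) (g h : G) :
    cosetLabels N ω {l | ∀ s ∈ l, s ∈ S} g h ⊆
      {x | PathLabel (cosetLabels N ω (insert [] ((fun s => [s]) '' S))) T g h x} := by
  rintro ⟨a, _⟩ ⟨l, hl, ha, rfl⟩
  induction l generalizing g a with
  | nil => exact .single ⟨[], mem_insert _ _, ha, rfl⟩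
  | cons s l ih =>
    obtain ⟨hs, hl⟩ := List.forall_mem_cons.1 hl
    obtain ⟨t, ht, hgt⟩ := hT (g * s)
    set b : Additive N := .ofMul ⟨g * s * t⁻¹, hgt⟩ with hb
    have hedge : (b, ω s) ∈ cosetLabels N ω (insert [] ((fun s => [s]) '' S)) g t :=
      ⟨[s], Or.inr ⟨s, hs, rfl⟩, by simp [hb], by simp⟩
    have htail : t * l.prod = ((-b + a).toMul : G) * h := by
      calc t * l.prod = (g * s * t⁻¹)⁻¹ * (g * (s :: l).prod) := by
            rw [List.prod_cons]; group
        _ = ((-b + a).toMul : G) * h := by rw [ha, ← mul_assoc]; rfl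
    simpa using PathLabel.cons hedge ht (ih t _ hl htail)

theorem setOf_pathLabel_subset_cosetLabels_words (ω : G → ℕ) (T : Set G) (g h : G) :
    {x | PathLabel (cosetLabels N ω (insert [] ((fun s => [s]) '' S))) T g h x} ⊆
      cosetLabels N ω {l | ∀ s ∈ l, s ∈ S} g h := by
  have hedge (g h : G) : cosetLabels N ω (insert [] ((fun s => [s]) '' S)) g h ⊆
      cosetLabels N ω {l | ∀ s ∈ l, s ∈ S} g h := by
    rintro x ⟨l, rfl | ⟨s, hs, rfl⟩, hlx⟩
    · exact ⟨[], by simp, hlx⟩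
    · exact ⟨[s], by simpa using hs, hlx⟩
  intro x hx
  induction hx with
  | single hx => exact hedge _ _ hx
  | cons hx _ _ ih =>
    refine add_mem_cosetLabels (fun l hl l' hl' => ?_) (hedge _ _ hx) ih
    exact List.forall_mem_append.2 ⟨hl, hl'⟩

theorem isSemilinearSet_cosetLabels_words [N.FiniteIndex] (hS : S.Finite) (ω : G → ℕ) (g h : G) :
    IsSemilinearSet (cosetLabels N ω {l | ∀ s ∈ l, s ∈ S} g h) := by
  obtain ⟨T, hT, -⟩ := N.exists_isComplement_right 1
  rw [(cosetLabels_words_subset_setOf_pathLabel ω (T := T) (fun g =>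
    ⟨_, (hT.toRightFun g).2, hT.mul_inv_toRightFun_mem g⟩) g h).antisymm
    (setOf_pathLabel_subset_cosetLabels_words ω T g h)]
  refine PathLabel.isSemilinearSet (fun p q => .of_finite ?_) hT.finite_right g h
  exact cosetLabels_finite ((hS.image _).insert _) p q

theorem isLeast_wordWeight (hS : Submonoid.closure S = ⊤) (ω : G → ℕ) (g : G) :
    IsLeast {m | ∃ l : List G, (∀ x ∈ l, x ∈ S) ∧ l.prod = g ∧ (l.map ω).sum = m}
      (wordWeight S ω g) := by
  obtain ⟨l, hl, hlg⟩ := Submonoid.exists_list_of_mem_closure (hS ▸ Submonoid.mem_top g)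
  exact ⟨Nat.sInf_mem ⟨_, l, hl, hlg, rfl⟩, fun m hm => Nat.sInf_le hm⟩

theorem list_prod_mem_pow_sum_map (hω : ∀ s ∈ S, 0 < ω s) (l : List G) (hl : ∀ x ∈ l, x ∈ S) :
    l.prod ∈ (insert 1 S) ^ (l.map ω).sum := by
  induction l with
  | nil => simp
  | cons s l ih =>
    obtain ⟨hs, hl⟩ := List.forall_mem_cons.1 hl
    rw [List.prod_cons, List.map_cons, List.sum_cons, pow_add]
    have hs_pow : s ∈ (insert 1 S) ^ ω s :=
      pow_subset_pow_right (mem_insert (1 : G) S) (hω s hs) (by simp [hs])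
    exact mul_mem_mul hs_pow (ih hl)

theorem finite_setOf_wordWeight_eq (hSfin : S.Finite) (hS : Submonoid.closure S = ⊤)
    (hω : ∀ s ∈ S, 0 < ω s) (m : ℕ) : {g | wordWeight S ω g = m}.Finite := by
  have hpow : ((insert 1 S) ^ m).Finite := by
    induction m with
    | zero => simp
    | succ m ih => exact pow_succ (insert 1 S) m ▸ ih.mul (hSfin.insert 1)
  refine hpow.subset ?_
  intro g hg
  obtain ⟨l, hl, rfl, hlw⟩ := (isLeast_wordWeight hS ω g).1
  exact hlw.trans hg ▸ list_prod_mem_pow_sum_map hω l hl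

theorem isSemilinearSet_setOf_wordWeight_eq [N.FiniteIndex] (hSfin : S.Finite)
    (hS : Submonoid.closure S = ⊤) (ω : G → ℕ) (t : G) :
    IsSemilinearSet {x : Additive N × ℕ | wordWeight S ω (x.1.toMul * t) = x.2} := by
  convert isSemilinearSet_setOf_isLeast
    (isSemilinearSet_cosetLabels_words (N := N) hSfin ω 1 t) using 1
  ext ⟨a, m⟩
  have hleast := isLeast_wordWeight hS ω (a.toMul * t)
  simp only [mem_ofPred_eq, cosetLabels, one_mul]
  exact ⟨fun h => h ▸ hleast, fun h => hleast.unique h⟩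

end Words

section CosetwiseSemilinear

open Set
open scoped Pointwise IsMulCommutative

variable {G : Type*} [Group G] {N : Subgroup G} [IsMulCommutative N]

/-- A set is cosetwise semilinear with respect to a commutative subgroup `N` if its trace on each
coset `N * g`, parametrized by `N`, is semilinear. -/
def IsCosetwiseSemilinear (N : Subgroup G) [IsMulCommutative N] (A : Set G) : Prop :=
  ∀ g : G, IsSemilinearSet {a : Additive N | (a.toMul : G) * g ∈ A}

namespace IsCosetwiseSemilinear

theorem iUnion {ι : Type*} [Finite ι] {A : ι → Set G} (hA : ∀ i, IsCosetwiseSemilinear N (A i)) :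
    IsCosetwiseSemilinear N (⋃ i, A i) := fun g => by
  simp only [mem_iUnion, ofPred_exists]
  exact .iUnion fun i => hA i g

theorem subgroup [Group.FG N] (H : Subgroup G) : IsCosetwiseSemilinear N (H : Set G) := fun g => by
  rcases eq_empty_or_nonempty {a : Additive N | (a.toMul : G) * g ∈ (H : Set G)} with
    hempty | ⟨a, ha⟩
  · exact hempty ▸ .empty
  · suffices {b : Additive N | (b.toMul : G) * g ∈ (H : Set G)} =
        a +ᵥ ((H.subgroupOf N).toAddSubgroup : Set (Additive N)) from
      this ▸ (isSemilinearSet_addSubgroup _).vadd a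
    ext b
    have hba : (b.toMul : G) * g = ((-a + b).toMul : G) * (a.toMul * g) := by
      rw [add_comm, ← mul_assoc, ← Subgroup.coe_mul, ← toMul_add, neg_add_cancel_right]
    rw [mem_vadd_set_iff_neg_vadd_mem, mem_ofPred_eq, hba]
    exact H.mul_mem_cancel_right ha

end IsCosetwiseSemilinear

theorem hasRationalGrowth_inter_coset [Group.FG N] [N.FiniteIndex] {S : Set G} (hSfin : S.Finite)
    (hS : Submonoid.closure S = ⊤) {ω : G → ℕ} (hω : ∀ s ∈ S, 0 < ω s) {A : Set G} {t : G}
    (hA : IsSemilinearSet {a : Additive N | (a.toMul : G) * t ∈ A}) :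
    HasRationalGrowth (wordWeight S ω) (A ∩ {g | g * t⁻¹ ∈ N}) := by
  set R : Set (Additive N × ℕ) := {x | wordWeight S ω (x.1.toMul * t) = x.2} ∩
    AddMonoidHom.fst (Additive N) ℕ ⁻¹' {a | (a.toMul : G) * t ∈ A}
  set e : Additive N × ℕ → G := fun x => x.1.toMul * t
  have hR : IsSemilinearSet R :=
    (isSemilinearSet_setOf_wordWeight_eq hSfin hS ω t).inter (hA.preimage _)
  have he : InjOn e R := by
    intro x hx y hy hxy
    refine Prod.ext (Subtype.ext (mul_right_cancel hxy)) ?_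
    exact hx.1.symm.trans ((congrArg _ hxy).trans hy.1)
  have hweight : ∀ x ∈ R, wordWeight S ω (e x) = AddMonoidHom.snd (Additive N) ℕ x :=
    fun x hx => hx.1
  have himage : e '' R = A ∩ {g | g * t⁻¹ ∈ N} := by
    ext g
    constructor
    · rintro ⟨⟨a, m⟩, ⟨-, hx⟩, rfl⟩
      exact ⟨hx, by simp [e]⟩
    · rintro ⟨hg, hgt⟩
      exact ⟨(.ofMul ⟨g * t⁻¹, hgt⟩, wordWeight S ω g), ⟨by simp, by simpa using hg⟩, by simp [e]⟩
  have hfin (m : ℕ) : (R ∩ AddMonoidHom.snd (Additive N) ℕ ⁻¹' {m}).Finite := by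
    refine .of_finite_image ((finite_setOf_wordWeight_eq hSfin hS hω m).subset ?_)
      (he.mono inter_subset_left)
    rintro _ ⟨x, ⟨hx, rfl⟩, rfl⟩
    exact hweight x hx
  exact himage ▸ (hasRationalGrowth_of_isSemilinearSet hR hfin).image he hweight

theorem IsCosetwiseSemilinear.hasRationalGrowth [N.FiniteIndex] {S : Set G} (hSfin : S.Finite)
    (hS : Submonoid.closure S = ⊤) {ω : G → ℕ} (hω : ∀ s ∈ S, 0 < ω s) {A : Set G}
    (hA : IsCosetwiseSemilinear N A) : HasRationalGrowth (wordWeight S ω) A := by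
  have : Group.FG G :=
    Group.fg_iff_monoid_fg.2 ⟨⟨hSfin.toFinset, by rw [hSfin.coe_toFinset, hS]⟩⟩
  have : Group.FG N := Subgroup.fg_of_index_ne_zero N
  obtain ⟨T, hT, -⟩ := N.exists_isComplement_right 1
  have hunique (g : G) : ∃! t : T, g * (t : G)⁻¹ ∈ N :=
    Subgroup.isComplement_iff_existsUnique_mul_inv_mem.1 hT g
  have hcover : A = ⋃ t ∈ T, A ∩ {g | g * t⁻¹ ∈ N} := by
    rw [← inter_iUnion₂, left_eq_inter]
    exact fun g _ => mem_iUnion₂.2 ⟨_, (hT.toRightFun g).2, hT.mul_inv_toRightFun_mem g⟩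
  rw [hcover]
  refine .biUnion_of_pairwiseDisjoint hT.finite_right (fun t ht u hu htu => ?_) fun t _ =>
    hasRationalGrowth_inter_coset hSfin hS hω (hA t)
  refine disjoint_left.2 fun g hgt hgu => htu ?_
  exact congrArg Subtype.val ((hunique g).unique (y₁ := ⟨t, ht⟩) (y₂ := ⟨u, hu⟩) hgt.2 hgu.2)

end CosetwiseSemilinear

theorem union_of_subgroups_growth_series_rational_general {G : Type*} [Group G] (N : Subgroup G)
    [N.FiniteIndex] [IsMulCommutative N] (S : Finset G)
    (hS : Submonoid.closure (S : Set G) = ⊤) (ω : G → ℕ) (hω : ∀ s ∈ S, 0 < ω s)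
    (A : Set G) (hA : IsCosetwiseSemilinear N A) :
    IsRationalSeries (PowerSeries.mk fun m =>
      (Nat.card {g : G // g ∈ A ∧ wordWeight (S : Set G) ω g = m} : ℤ)) :=
  (hA.hasRationalGrowth S.finite_toSet hS hω).isRationalSeries

/-- The relative growth series of a finite union of subgroups of a finitely generated
virtually abelian group is rational, for any finite weighted monoid generating set. -/
theorem union_of_subgroups_growth_series_rational {G : Type*} [Group G]
    (n : ℕ) (N : Subgroup G) (hN : N.Normal) (hNfin : N.FiniteIndex)
    (hNiso : Nonempty (N ≃* Multiplicative (Fin n → ℤ)))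
    (S : Finset G) (hS : Submonoid.closure (S : Set G) = ⊤)
    (ω : G → ℕ) (hω : ∀ s ∈ S, 0 < ω s)
    (k : ℕ) (H : Fin k → Subgroup G) :
    IsRationalSeries (PowerSeries.mk fun m =>
      (Nat.card {g : G // (∃ i, g ∈ H i) ∧ wordWeight (S : Set G) ω g = m} : ℤ)) := by
  obtain ⟨e⟩ := hNiso
  have : IsMulCommutative N :=
    ⟨⟨fun a b => e.injective (by rw [map_mul, map_mul, mul_comm])⟩⟩
  have : Group.FG N := Group.fg_of_surjective (f := e.symm.toMonoidHom) e.symm.surjective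
  simpa using union_of_subgroups_growth_series_rational_general N S hS ω hω (⋃ i, (H i : Set G))
    (.iUnion fun i => .subgroup (H i))
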